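/- Let λ : ℝ × ℝ → (0, ∞) be differentiable at a point (x₀, t₀), and fix η with 0 < η < λ(x₀, t₀). Define, in a neighbourhood of (x₀, t₀) where η < λ(x, t), the fields u(x, t) = η/(π·√(λ(x,t)² − η²)) and v(x, t) = 6η(2η² − λ(x,t)²)/(π·√(λ(x,t)² − η²)). Then the continuity equation ∂_t u + ∂_x v = 0 holds at (x₀, t₀) if and only if λ satisfies the Hopf equation ∂_t λ + 6λ²·∂_x λ = 0 at (x₀, t₀). -/

import Mathlib

/-!
Write `u(η; L)` and `v(η; L)` for the density of states and the flux as functions of the band edge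
`L > η`. Differentiating in `L` gives `∂u/∂L = c` and `∂v/∂L = 6 L² c` with the common factor
`c = -η L / (π (√(L² - η²))³)` (`hasDerivAt_density`, `hasDerivAt_flux`). By the chain rule
`∂ₜ u + ∂ₓ v = c (Λₜ + 6 Λ² Λₓ)`, and `c ≠ 0`, so the two equations are equivalent.
-/

lemma hasDerivAt_sqrt_sq_sub_sq {η L : ℝ} (hη : 0 < η) (hL : η < L) :
    HasDerivAt (fun l : ℝ => Real.sqrt (l ^ 2 - η ^ 2)) (L / Real.sqrt (L ^ 2 - η ^ 2)) L := by
  have hR : 0 < L ^ 2 - η ^ 2 := by nlinarith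
  have hs := Real.sqrt_pos.2 hR
  refine (((hasDerivAt_pow 2 L).sub_const (η ^ 2)).sqrt hR.ne').congr_deriv ?_
  norm_num
  field_simp

lemma hasDerivAt_density {η L : ℝ} (hη : 0 < η) (hL : η < L) :
    HasDerivAt (fun l : ℝ => η / (Real.pi * Real.sqrt (l ^ 2 - η ^ 2)))
      (-(η * L) / (Real.pi * Real.sqrt (L ^ 2 - η ^ 2) ^ 3)) L := by
  have hs : 0 < Real.sqrt (L ^ 2 - η ^ 2) := Real.sqrt_pos.2 (by nlinarith)
  have hpi := Real.pi_pos
  refine ((hasDerivAt_const L η).fun_div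
    ((hasDerivAt_sqrt_sq_sub_sq hη hL).const_mul Real.pi) (mul_pos hpi hs).ne').congr_deriv ?_
  field_simp
  ring

/-- The derivative of the flux in the band edge is `6 L²` times that of the density: this is where
the Hopf characteristic speed `6 L²` comes from. -/
lemma hasDerivAt_flux {η L : ℝ} (hη : 0 < η) (hL : η < L) :
    HasDerivAt
      (fun l : ℝ => 6 * η * (2 * η ^ 2 - l ^ 2) / (Real.pi * Real.sqrt (l ^ 2 - η ^ 2)))
      (6 * L ^ 2 * (-(η * L) / (Real.pi * Real.sqrt (L ^ 2 - η ^ 2) ^ 3))) L := by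
  have hR : 0 < L ^ 2 - η ^ 2 := by nlinarith
  have hs := Real.sqrt_pos.2 hR
  have hsq := Real.sq_sqrt hR.le
  have hpi := Real.pi_pos
  have hnum : HasDerivAt (fun l : ℝ => 6 * η * (2 * η ^ 2 - l ^ 2)) (6 * η * (-(2 * L))) L := by
    simpa using ((hasDerivAt_pow 2 L).const_sub (2 * η ^ 2)).const_mul (6 * η)
  refine (hnum.fun_div
    ((hasDerivAt_sqrt_sq_sub_sq hη hL).const_mul Real.pi) (mul_pos hpi hs).ne').congr_deriv ?_
  field_simp
  rw [hsq]
  ring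

/-- For a modulated genus-0 KdV soliton condensate with slowly varying spectral edge
`Λ(x,t) > 0`, differentiable at `(x₀,t₀)`, and a fixed spectral parameter
`0 < η < Λ(x₀,t₀)`, the continuity (kinetic) equation `∂ₜ u + ∂ₓ v = 0` for
`u = η/(π√(Λ²-η²))`, `v = 6η(2η²-Λ²)/(π√(Λ²-η²))` holds at `(x₀,t₀)` if and only if
`Λ` satisfies the Hopf (genus-0 Whitham) equation `Λₜ + 6Λ²Λₓ = 0` there. -/
theorem genus0_kinetic_iff_hopf (Λ : ℝ × ℝ → ℝ) (x₀ t₀ η : ℝ)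
    (hpos : ∀ p, 0 < Λ p)
    (hdiff : DifferentiableAt ℝ Λ (x₀, t₀))
    (hη0 : 0 < η) (hηlt : η < Λ (x₀, t₀)) :
    (deriv (fun t => η / (Real.pi * Real.sqrt ((Λ (x₀, t)) ^ 2 - η ^ 2))) t₀ +
      deriv (fun x =>
        6 * η * (2 * η ^ 2 - (Λ (x, t₀)) ^ 2) /
          (Real.pi * Real.sqrt ((Λ (x, t₀)) ^ 2 - η ^ 2))) x₀ = 0) ↔
    (deriv (fun t => Λ (x₀, t)) t₀ +
      6 * (Λ (x₀, t₀)) ^ 2 * deriv (fun x => Λ (x, t₀)) x₀ = 0) := by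
  have ht : HasDerivAt (fun t => Λ (x₀, t)) (deriv (fun t => Λ (x₀, t)) t₀) t₀ :=
    (DifferentiableAt.comp (f := fun t : ℝ => (x₀, t)) t₀ hdiff (by fun_prop)).hasDerivAt
  have hx : HasDerivAt (fun x => Λ (x, t₀)) (deriv (fun x => Λ (x, t₀)) x₀) x₀ :=
    (DifferentiableAt.comp (f := fun x : ℝ => (x, t₀)) x₀ hdiff (by fun_prop)).hasDerivAt
  have hu := ((hasDerivAt_density hη0 hηlt).comp t₀ ht).deriv
  have hv := (HasDerivAt.comp (h := fun x => Λ (x, t₀)) x₀ (hasDerivAt_flux hη0 hηlt) hx).deriv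
  simp only [Function.comp_def] at hu hv
  rw [hu, hv]
  have hs : 0 < Real.sqrt (Λ (x₀, t₀) ^ 2 - η ^ 2) := Real.sqrt_pos.2 (by nlinarith)
  have hc : -(η * Λ (x₀, t₀)) / (Real.pi * Real.sqrt (Λ (x₀, t₀) ^ 2 - η ^ 2) ^ 3) ≠ 0 :=
    div_ne_zero (neg_ne_zero.2 (mul_pos hη0 (hpos _)).ne')
      (mul_pos Real.pi_pos (pow_pos hs 3)).ne'
  generalize -(η * Λ (x₀, t₀)) / (Real.pi * Real.sqrt (Λ (x₀, t₀) ^ 2 - η ^ 2) ^ 3) = c at hc ⊢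
  rw [show ∀ a b k : ℝ, c * a + k * c * b = c * (a + k * b) by intros; ring]
  exact mul_eq_zero_iff_left hc
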